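/- arXiv:1605.08310 — 2 statements merged into one kernel-verified Lean document; each statement's English description precedes it below -/
import Mathlib

section
/- For every quasi-poset P on [n], ehr_P(X) = Σ_{~ ◁ P} (μ_{P/~} / cl(~)!) · (Π_{C an equivalence class of ~} ehr'_{P|C}(0)) · X^{cl(~)}, where the sum ranges over all P-compatible equivalence relations ~ on Fin n, ehr'_{P|C}(0) denotes the value at 0 of the derivative of the polynomial ehr_{P|C} of the restriction of P to the class C, and μ_{P/~} is the number of heap-orderings of the quasi-poset P/~. -/
open Polynomial

/-- The quotient quasi-order `≤_{P/~}`: the transitive (here reflexive-transitive)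
closure of (`i ≤_P j` or `i ~ j`). -/
def quotLe {n : ℕ} (le r : Fin n → Fin n → Prop) : Fin n → Fin n → Prop :=
  Relation.ReflTransGen (fun i j => le i j ∨ r i j)

/-- `~ ◁ P`: the equivalence relation `r` is `P`-compatible, i.e. its classes are
`P`-connected and `i ≤_{P/~} j` together with `j ≤_{P/~} i` imply `i ~ j`. -/
def Compat {n : ℕ} (le r : Fin n → Fin n → Prop) : Prop :=
  (∀ x y, r x y →
    Relation.ReflTransGen (fun a b => r a x ∧ r b x ∧ (le a b ∨ le b a)) x y) ∧
  (∀ i j, quotLe le r i j → quotLe le r j i → r i j)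

/-- The number of equivalence classes of a relation. -/
noncomputable def clRel {n : ℕ} (r : Fin n → Fin n → Prop) : ℕ :=
  Nat.card (Quot r)

/-- `cl(Q)` for a quasi-poset `Q`. -/
noncomputable def clQP {n : ℕ} (le : Fin n → Fin n → Prop) : ℕ :=
  clRel (fun i j => le i j ∧ le j i)

/-- `μ_Q`: the number of heap-orderings of the quasi-poset `Q`, i.e. maps
`f : Fin n → Fin (cl Q)` with `i ≤_Q j → f i ≤ f j` and `f i = f j ↔ i ~_Q j`. -/
noncomputable def heapCount {n : ℕ} (le : Fin n → Fin n → Prop) : ℕ :=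
  Nat.card {f : Fin n → Fin (clQP le) //
    (∀ i j, le i j → f i ≤ f j) ∧ (∀ i j, f i = f j ↔ (le i j ∧ le j i))}

/-- Number of monotone maps `Fin n → Fin k` (the set `L_P(k)`). -/
noncomputable def LCount {n : ℕ} (le : Fin n → Fin n → Prop) (k : ℕ) : ℕ :=
  Nat.card {f : Fin n → Fin k // ∀ i j, le i j → f i ≤ f j}

/-- Number of monotone maps `B → Fin k` for the restriction of `le` to `B`. -/
noncomputable def LCountOn {n : ℕ} (le : Fin n → Fin n → Prop) (B : Set (Fin n))
    (k : ℕ) : ℕ :=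
  Nat.card {f : B → Fin k // ∀ i j : B, le i.1 j.1 → f i ≤ f j}


/-- components of the fibers of `g` -/
def fcomp {n : ℕ} (le : Fin n → Fin n → Prop) {α : Type} (g : Fin n → α) :
    Fin n → Fin n → Prop :=
  Relation.ReflTransGen (fun a b => (le a b ∨ le b a) ∧ g a = g b)

def Sg {n : ℕ} (le r : Fin n → Fin n → Prop) {k : ℕ} (g : Fin n → Fin k) : Prop :=
  (∀ i j, le i j → g i ≤ g j) ∧ fcomp le g = r

theorem fcomp_eq {n : ℕ} {le : Fin n → Fin n → Prop} {α : Type} {g : Fin n → α} {x y : Fin n}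
    (h : fcomp le g x y) : g x = g y := by
  induction h with
  | refl => rfl
  | tail _ h ih => exact ih.trans h.2

theorem fcomp_equiv {n : ℕ} (le : Fin n → Fin n → Prop) {α : Type} (g : Fin n → α) :
    Equivalence (fcomp le g) := by
  refine ⟨fun _ => Relation.ReflTransGen.refl, ?_, fun h1 h2 => Relation.ReflTransGen.trans h1 h2⟩
  intro x y h
  have : Std.Symm (fun a b => (le a b ∨ le b a) ∧ g a = g b) :=
    ⟨fun a b h => ⟨h.1.symm, h.2.symm⟩⟩
  exact Relation.ReflTransGen.stdSymm.symm _ _ h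

theorem quotLe_mono {n k : ℕ} {le r : Fin n → Fin n → Prop} {g : Fin n → Fin k}
    (h1 : ∀ i j, le i j → g i ≤ g j) (h2 : ∀ i j, r i j → g i = g j) {i j : Fin n}
    (h : quotLe le r i j) : g i ≤ g j := by
  induction h with
  | refl => rfl
  | tail _ h ih => exact ih.trans (h.elim (h1 _ _) (fun h => (h2 _ _ h).le))

theorem fcomp_compat {n k : ℕ} (le : Fin n → Fin n → Prop) (g : Fin n → Fin k)
    (hg : ∀ i j, le i j → g i ≤ g j) : Compat le (fcomp le g) := by
  have E := fcomp_equiv le g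
  constructor
  · intro x y h
    induction h with
    | refl => exact .refl
    | tail h1 h2 ih =>
      exact ih.tail ⟨E.symm h1, E.symm (h1.tail h2), h2.1⟩
  · intro i j h
    have M : ∀ {i j}, quotLe le (fcomp le g) i j → g i ≤ g j :=
      fun h => quotLe_mono hg (fun _ _ => fcomp_eq) h
    induction h with
    | refl => intro _; exact E.refl _
    | @tail b c h1 h2 ih =>
      intro h3
      have hbc : quotLe le (fcomp le g) b c := Relation.ReflTransGen.single h2
      have a1 := ih (hbc.trans h3)
      refine E.trans a1 ?_
      rcases h2 with h2 | h2
      · have e : g b = g c := le_antisymm (M hbc) ((M h3).trans (M h1))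
        exact Relation.ReflTransGen.single ⟨Or.inl h2, e⟩
      · exact h2

theorem Sg_comp {n k l : ℕ} (le r : Fin n → Fin n → Prop) (g : Fin n → Fin k)
    (e : Fin k ↪o Fin l) : Sg le r (fun x => e (g x)) ↔ Sg le r g := by
  simp [Sg, fcomp]

theorem card_heap {n : ℕ} (le r : Fin n → Fin n → Prop) (hr : Equivalence r)
    (hc : Compat le r) (N : ℕ) (hN : N = clRel r) :
    Nat.card {f : Fin n → Fin N // (∀ i j, quotLe le r i j → f i ≤ f j) ∧
      (∀ i j, f i = f j ↔ (quotLe le r i j ∧ quotLe le r j i))} =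
    Nat.card {g : Fin n → Fin N // Sg le r g ∧ Function.Surjective g} := by
  have hq : ∀ i j, (quotLe le r i j ∧ quotLe le r j i) ↔ r i j := fun i j =>
    ⟨fun h => hc.2 _ _ h.1 h.2, fun h => ⟨.single (Or.inr h), .single (Or.inr (hr.symm h))⟩⟩
  simp only [hq]
  have hcard : Nat.card (Quot r) = Nat.card (Fin N) := by simp [hN, clRel]
  apply Nat.card_congr
  apply Equiv.subtypeEquivRight
  intro f
  constructor
  · rintro ⟨h1, h2⟩
    refine ⟨⟨fun i j h => h1 i j (.single (Or.inl h)), ?_⟩, ?_⟩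
    · funext i j
      apply propext
      constructor
      · exact fun h => (h2 i j).1 (fcomp_eq h)
      · intro h
        exact Relation.ReflTransGen.mono (fun a b hab =>
          ⟨hab.2.2, (h2 a b).2 (hr.trans hab.1 (hr.symm hab.2.1))⟩) _ _ (hc.1 i j h)
    · let F : Quot r → Fin N := Quot.lift f (fun a b h => (h2 a b).2 h)
      have hF : Function.Injective F := by
        rintro ⟨a⟩ ⟨b⟩ h
        exact Quot.sound ((h2 a b).1 h)
      have hb := (Nat.bijective_iff_injective_and_card F).2 ⟨hF, hcard⟩
      intro y
      obtain ⟨⟨a⟩, ha⟩ := hb.2 y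
      exact ⟨a, ha⟩
  · rintro ⟨⟨h1, h2⟩, h3⟩
    have h4 : ∀ i j, r i j → f i = f j := fun i j h => by
      rw [← h2] at h; exact fcomp_eq h
    refine ⟨fun i j h => quotLe_mono h1 h4 h, fun i j => ⟨fun h => ?_, h4 i j⟩⟩
    let F : Quot r → Fin N := Quot.lift f h4
    have hF : Function.Surjective F := fun y => by
      obtain ⟨a, ha⟩ := h3 y
      exact ⟨Quot.mk r a, ha⟩
    have hb := (Nat.bijective_iff_surjective_and_card F).2 ⟨hF, hcard⟩
    have : Quot.mk r i = Quot.mk r j := hb.1 h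
    exact (Quot.eq.1 this).rec (fun _ _ h => h) hr.refl (fun _ _ _ h => hr.symm h)
      (fun _ _ _ _ _ => hr.trans)

noncomputable def cS {n : ℕ} (le r : Fin n → Fin n → Prop) (j : ℕ) : ℕ :=
  Nat.card {g : Fin n → Fin j // Sg le r g ∧ Function.Surjective g}

theorem heapCount_eq {n : ℕ} (le r : Fin n → Fin n → Prop) (hr : Equivalence r)
    (hc : Compat le r) : heapCount (quotLe le r) = cS le r (clRel r) := by
  have hq : (fun i j => quotLe le r i j ∧ quotLe le r j i) = r := by
    funext i j
    exact propext ⟨fun h => hc.2 _ _ h.1 h.2,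
      fun h => ⟨.single (Or.inr h), .single (Or.inr (hr.symm h))⟩⟩
  have e : clQP (quotLe le r) = clRel r := by rw [clQP, hq]
  rw [heapCount, card_heap le r hr hc _ e, e, cS]

theorem cS_zero {n : ℕ} (le r : Fin n → Fin n → Prop) (j : ℕ) (hj : clRel r < j) :
    cS le r j = 0 := by
  rw [cS]
  have : IsEmpty {g : Fin n → Fin j // Sg le r g ∧ Function.Surjective g} := by
    constructor
    rintro ⟨f, ⟨_, h2⟩, h3⟩
    have h4 : ∀ i j, r i j → f i = f j := fun i j h => by
      rw [← h2] at h; exact fcomp_eq h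
    have hF : Function.Surjective (Quot.lift f h4) := fun y => by
      obtain ⟨a, ha⟩ := h3 y
      exact ⟨Quot.mk r a, ha⟩
    have := Nat.card_le_card_of_surjective _ hF
    simp only [Nat.card_eq_fintype_card (α := Fin j), Fintype.card_fin] at this
    rw [clRel] at hj
    omega
  simp

noncomputable def sgEquiv {n : ℕ} (le r : Fin n → Fin n → Prop) (k : ℕ) :
    (Σ s : Finset (Fin k), {g : Fin n → Fin s.card // Sg le r g ∧ Function.Surjective g}) ≃
    {g : Fin n → Fin k // Sg le r g} := by
  refine Equiv.ofBijective
    (fun q => ⟨fun x => q.1.orderEmbOfFin rfl (q.2.1 x), (Sg_comp le r _ _).2 q.2.2.1⟩) ⟨?_, ?_⟩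
  · rintro ⟨s, g, hg, hgs⟩ ⟨t, h, hh, hhs⟩ e
    have e' : ∀ x, s.orderEmbOfFin rfl (g x) = t.orderEmbOfFin rfl (h x) := fun x =>
      congrFun (congrArg Subtype.val e) x
    have hs : ∀ (s : Finset (Fin k)) (g : Fin n → Fin s.card), Function.Surjective g →
        Set.range (fun x => s.orderEmbOfFin rfl (g x)) = s := by
      intro s g hg
      rw [← Finset.range_orderEmbOfFin s rfl]
      exact hg.range_comp (s.orderEmbOfFin rfl)
    have hst : s = t := by
      rw [← Finset.coe_inj, ← hs s g hgs, ← hs t h hhs]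
      exact congrArg Set.range (funext e')
    subst hst
    have : g = h := funext fun x => (s.orderEmbOfFin rfl).injective (e' x)
    subst this
    rfl
  · rintro ⟨f, hf⟩
    classical
    let s : Finset (Fin k) := Finset.univ.image f
    have hx : ∀ x, ∃ y, s.orderEmbOfFin rfl y = f x := by
      intro x
      have : f x ∈ Set.range (s.orderEmbOfFin rfl) := by
        rw [Finset.range_orderEmbOfFin]; simp [s]
      exact this
    choose g hg using hx
    have hfg : (fun x => s.orderEmbOfFin rfl (g x)) = f := funext hg
    refine ⟨⟨s, g, ?_, ?_⟩, Subtype.ext hfg⟩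
    · rw [← Sg_comp le r g (s.orderEmbOfFin rfl), hfg]; exact hf
    · intro y
      have : s.orderEmbOfFin rfl y ∈ s := Finset.orderEmbOfFin_mem _ _ _
      obtain ⟨x, -, hx⟩ := Finset.mem_image.1 this
      exact ⟨x, (s.orderEmbOfFin rfl).injective (by rw [hg, hx])⟩

theorem card_Sg {n : ℕ} (le r : Fin n → Fin n → Prop) (k : ℕ) :
    Nat.card {g : Fin n → Fin k // Sg le r g} =
      ∑ j ∈ Finset.range (k + 1), k.choose j * cS le r j := by
  classical
  rw [← Nat.card_congr (sgEquiv le r k), Nat.card_sigma]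
  have := Finset.sum_powerset_apply_card (cS le r) (x := (Finset.univ : Finset (Fin k)))
  simp only [Finset.powerset_univ, Finset.card_univ, Fintype.card_fin, smul_eq_mul] at this
  exact this

noncomputable def Spoly {n : ℕ} (le r : Fin n → Fin n → Prop) : ℚ[X] :=
  ∑ j ∈ Finset.range (clRel r + 1), C ((cS le r j : ℚ) / j.factorial) * descPochhammer ℚ j

theorem Spoly_eval {n : ℕ} (le r : Fin n → Fin n → Prop) (k : ℕ) :
    (Spoly le r).eval (k : ℚ) = Nat.card {g : Fin n → Fin k // Sg le r g} := by
  have h1 : ∀ j, (eval (k : ℚ) (C ((cS le r j : ℚ) / j.factorial) * descPochhammer ℚ j)) =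
      ((k.choose j * cS le r j : ℕ) : ℚ) := by
    intro j
    have : (j.factorial : ℚ) ≠ 0 := by positivity
    rw [eval_mul, eval_C, descPochhammer_eval_eq_descFactorial,
      Nat.descFactorial_eq_factorial_mul_choose]
    push_cast
    field_simp
  rw [card_Sg, Spoly, eval_finset_sum]
  simp only [h1]
  rw [← Nat.cast_sum]
  congr 1
  rcases le_total (clRel r) k with h | h
  · apply Finset.sum_subset
    · intro x; simp; omega
    · intro x _ hx
      rw [cS_zero le r x (by simpa using hx), mul_zero]
  · symm
    apply Finset.sum_subset
    · intro x; simp; omega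
    · intro x _ hx
      rw [Nat.choose_eq_zero_of_lt (by simpa using hx), zero_mul]

theorem Spoly_coeff_gt {n : ℕ} (le r : Fin n → Fin n → Prop) (d : ℕ) (hd : clRel r < d) :
    (Spoly le r).coeff d = 0 := by
  rw [Spoly, finset_sum_coeff]
  apply Finset.sum_eq_zero
  intro j hj
  rw [coeff_C_mul, coeff_eq_zero_of_natDegree_lt, mul_zero]
  rw [descPochhammer_natDegree]
  simp at hj; omega

theorem Spoly_coeff_eq {n : ℕ} (le r : Fin n → Fin n → Prop) :
    (Spoly le r).coeff (clRel r) = (cS le r (clRel r) : ℚ) / (clRel r).factorial := by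
  rw [Spoly, finset_sum_coeff, Finset.sum_range_succ, Finset.sum_eq_zero, zero_add, coeff_C_mul]
  · have := monic_descPochhammer ℚ (clRel r)
    rw [Monic, leadingCoeff, descPochhammer_natDegree] at this
    rw [this, mul_one]
  intro j hj
  rw [coeff_C_mul, coeff_eq_zero_of_natDegree_lt, mul_zero]
  rw [descPochhammer_natDegree]
  simp at hj; omega

theorem card_classes {n : ℕ} (le r : Fin n → Fin n → Prop) (hr : Equivalence r) (m : ℕ) :
    Nat.card {h : Fin n → Fin m // ∀ i j, le i j → r i j → h i ≤ h j} =
      ∏ᶠ c : Quot r, LCountOn le {x | Quot.mk r x = c} m := by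
  classical
  have : Fintype (Quot r) := Fintype.ofFinite _
  rw [finprod_eq_prod_of_fintype]
  simp only [LCountOn]
  rw [← Nat.card_pi]
  have hq : ∀ {i j}, Quot.mk r i = Quot.mk r j → r i j := fun {i j} this =>
    (Quot.eq.1 this).rec (fun _ _ h => h) hr.refl (fun _ _ _ h => hr.symm h)
      (fun _ _ _ _ _ => hr.trans)
  apply Nat.card_congr
  exact
  { toFun := fun h c => ⟨fun x => h.1 x.1, fun i j hij =>
      h.2 _ _ hij (hq (i.2.trans j.2.symm))⟩
    invFun := fun H => ⟨fun x => (H (Quot.mk r x)).1 ⟨x, rfl⟩, fun i j hij hrij => by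
      have e := Quot.sound hrij
      have h2 := (H (Quot.mk r j)).2 ⟨i, e⟩ ⟨j, rfl⟩ hij
      refine le_trans (le_of_eq ?_) h2
      have : ∀ c (hc : Quot.mk r i = c), (H (Quot.mk r i)).1 ⟨i, rfl⟩ = (H c).1 ⟨i, hc⟩ := by
        intro c hc; subst hc; rfl
      exact this _ e⟩
    left_inv := fun h => rfl
    right_inv := fun H => by
      funext c
      apply Subtype.ext
      funext x
      obtain ⟨x, hx⟩ := x
      simp only [Set.mem_setOf_eq] at hx
      subst hx
      rfl }

theorem LCount_mul {n : ℕ} (le : Fin n → Fin n → Prop) (k m : ℕ) :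
    LCount le (k * m) = Nat.card (Σ g : {g : Fin n → Fin k // ∀ i j, le i j → g i ≤ g j},
      {h : Fin n → Fin m // ∀ i j, le i j → fcomp le g.1 i j → h i ≤ h j}) := by
  rw [LCount]
  have key : ∀ a b : Fin k × Fin m, finProdFinEquiv a ≤ finProdFinEquiv b ↔
      a.1 ≤ b.1 ∧ (a.1 = b.1 → a.2 ≤ b.2) := by
    rintro ⟨⟨a, ha⟩, ⟨b, hb⟩⟩ ⟨⟨c, hc⟩, ⟨d, hd⟩⟩
    simp only [Fin.le_def, finProdFinEquiv_apply_val, Fin.mk.injEq]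
    rcases lt_trichotomy a c with h | h | h
    · have : m * (a + 1) ≤ m * c := Nat.mul_le_mul_left _ h
      rw [mul_add] at this
      constructor
      · intro _; constructor <;> omega
      · intro _; omega
    · subst h; simp
    · have : m * (c + 1) ≤ m * a := Nat.mul_le_mul_left _ h
      rw [mul_add] at this
      constructor <;> intro _ <;> omega
  have key2 : ∀ a b : Fin (k * m), a ≤ b ↔
      (finProdFinEquiv.symm a).1 ≤ (finProdFinEquiv.symm b).1 ∧
      ((finProdFinEquiv.symm a).1 = (finProdFinEquiv.symm b).1 →
        (finProdFinEquiv.symm a).2 ≤ (finProdFinEquiv.symm b).2) := by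
    intro a b
    rw [← key, Equiv.apply_symm_apply, Equiv.apply_symm_apply]
  apply Nat.card_congr
  exact
  { toFun := fun f => ⟨⟨fun x => (finProdFinEquiv.symm (f.1 x)).1,
        fun i j h => ((key2 _ _).1 (f.2 i j h)).1⟩,
      ⟨fun x => (finProdFinEquiv.symm (f.1 x)).2,
        fun i j h h' => ((key2 _ _).1 (f.2 i j h)).2 (fcomp_eq h')⟩⟩
    invFun := fun q => ⟨fun x => finProdFinEquiv (q.1.1 x, q.2.1 x), fun i j h =>
      (key _ _).2 ⟨q.1.2 i j h, fun e => q.2.2 i j h (.single ⟨Or.inl h, e⟩)⟩⟩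
    left_inv := fun f => by
      apply Subtype.ext
      funext x
      exact finProdFinEquiv.apply_symm_apply _
    right_inv := fun q => by
      obtain ⟨⟨g, hg⟩, ⟨h, hh⟩⟩ := q
      have e1 : (fun x => (finProdFinEquiv.symm (finProdFinEquiv (g x, h x))).1) = g := by
        funext x; rw [Equiv.symm_apply_apply]
      have e2 : (fun x => (finProdFinEquiv.symm (finProdFinEquiv (g x, h x))).2) = h := by
        funext x; rw [Equiv.symm_apply_apply]
      refine Sigma.ext (Subtype.ext e1) ?_
      dsimp only
      congr! }

theorem LCount_mul' {n : ℕ} (le : Fin n → Fin n → Prop) (k m : ℕ)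
    [Fintype {r : Fin n → Fin n → Prop // Equivalence r ∧ Compat le r}] :
    LCount le (k * m) = ∑ r : {r : Fin n → Fin n → Prop // Equivalence r ∧ Compat le r},
      Nat.card {g : Fin n → Fin k // Sg le r.1 g} *
        ∏ᶠ c : Quot r.1, LCountOn le {x | Quot.mk r.1 x = c} m := by
  classical
  rw [LCount_mul]
  have : Fintype {g : Fin n → Fin k // ∀ i j, le i j → g i ≤ g j} := Fintype.ofFinite _
  rw [Nat.card_sigma]
  let R : {g : Fin n → Fin k // ∀ i j, le i j → g i ≤ g j} →
    {r : Fin n → Fin n → Prop // Equivalence r ∧ Compat le r} := fun g =>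
      ⟨fcomp le g.1, fcomp_equiv le g.1, fcomp_compat le g.1 g.2⟩
  rw [← Finset.sum_fiberwise Finset.univ R]
  apply Finset.sum_congr rfl
  intro r _
  rw [Finset.sum_congr rfl (g := fun _ => ∏ᶠ c : Quot r.1, LCountOn le {x | Quot.mk r.1 x = c} m)]
  · rw [Finset.sum_const, smul_eq_mul]
    congr 1
    rw [← Fintype.card_subtype, ← Nat.card_eq_fintype_card]
    apply Nat.card_congr
    refine (Equiv.subtypeEquivRight fun g => ?_).trans
      (Equiv.subtypeSubtypeEquivSubtypeInter _ (fun g => fcomp le g = r.1))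
    exact Subtype.ext_iff
  · intro g hg
    have hg' : fcomp le g.1 = r.1 := congrArg Subtype.val (Finset.mem_filter.1 hg).2
    rw [card_classes _ _ (fcomp_equiv le g.1), hg']

theorem prod_coeff {ι : Type} [Fintype ι] (F : ι → ℚ[X]) (hF : ∀ i, (F i).eval 0 = 0) :
    (∏ i, F i) = X ^ (Fintype.card ι) * ∏ i, (F i).divX := by
  rw [← Finset.card_univ, ← Finset.prod_const, ← Finset.prod_mul_distrib]
  refine Finset.prod_congr rfl fun i _ => ?_
  have := (F i).divX_mul_X_add
  rw [coeff_zero_eq_eval_zero, hF, C_0, add_zero] at this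
  rw [mul_comm, this]

/-- `ehr_P(X) = Σ_{~ ◁ P} (μ_{P/~} / cl(~)!) · (Π_C ehr'_{P|C}(0)) · X^{cl(~)}`. -/
theorem ehr_eq_sum_over_compat {n : ℕ} (le : Fin n → Fin n → Prop)
    (hrefl : ∀ i, le i i)
    (htrans : ∀ i j k, le i j → le j k → le i k)
    (p : ℚ[X]) (hp : ∀ k : ℕ, p.eval (k : ℚ) = LCount le k)
    (E : Set (Fin n) → ℚ[X])
    (hE : ∀ (B : Set (Fin n)) (k : ℕ), (E B).eval (k : ℚ) = LCountOn le B k) :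
    p = ∑ᶠ r : {r : Fin n → Fin n → Prop // Equivalence r ∧ Compat le r},
      Polynomial.C ((heapCount (quotLe le r.1) : ℚ) / (Nat.factorial (clRel r.1)) *
          ∏ᶠ c : Quot r.1,
            (Polynomial.derivative (E {x | Quot.mk r.1 x = c})).eval 0) *
        Polynomial.X ^ (clRel r.1) := by
  classical
  have : Fintype {r : Fin n → Fin n → Prop // Equivalence r ∧ Compat le r} := Fintype.ofFinite _
  have iQ : ∀ r : Fin n → Fin n → Prop, Fintype (Quot r) := fun r => Fintype.ofFinite _
  rw [finsum_eq_sum_of_fintype]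
  simp only [finprod_eq_prod_of_fintype]
  have nat_ext : ∀ a b : ℚ[X], (∀ k : ℕ, a.eval (k : ℚ) = b.eval (k : ℚ)) → a = b := by
    intro a b h
    apply Polynomial.eq_of_infinite_eval_eq
    apply (Set.infinite_range_of_injective (Nat.cast_injective (R := ℚ))).mono
    rintro _ ⟨k, rfl⟩
    exact h k
  let Pr : {r : Fin n → Fin n → Prop // Equivalence r ∧ Compat le r} → ℚ[X] := fun r =>
    ∏ c : Quot r.1, E {x | Quot.mk r.1 x = c}
  have step1 : ∀ m : ℕ, p.comp (C (m : ℚ) * X) = ∑ r, C ((Pr r).eval (m : ℚ)) * Spoly le r.1 := by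
    intro m
    apply nat_ext
    intro k
    rw [eval_comp, eval_mul, eval_C, eval_X, ← Nat.cast_mul, hp, mul_comm m k, LCount_mul',
      eval_finset_sum, Nat.cast_sum]
    refine Finset.sum_congr rfl fun r _ => ?_
    rw [eval_mul, eval_C, Spoly_eval, finprod_eq_prod_of_fintype, eval_prod, Nat.cast_mul,
      Nat.cast_prod, mul_comm]
    simp only [hE]
  have step2 : ∀ d : ℕ, C (p.coeff d) * X ^ d = ∑ r, C ((Spoly le r.1).coeff d) * Pr r := by
    intro d
    apply nat_ext
    intro m
    have := congrArg (fun q => coeff q d) (step1 m)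
    simp only [comp_C_mul_X_coeff, finset_sum_coeff, coeff_C_mul] at this
    simp only [eval_mul, eval_C, eval_pow, eval_X, eval_finset_sum, this]
    exact Finset.sum_congr rfl fun r _ => mul_comm _ _
  ext d
  have h3 := congrArg (fun q => coeff q d) (step2 d)
  simp only [coeff_C_mul, coeff_X_pow, if_true, mul_one, finset_sum_coeff] at h3
  rw [h3, finset_sum_coeff]
  refine Finset.sum_congr rfl fun r _ => ?_
  have hE0 : ∀ c : Quot r.1, (E {x | Quot.mk r.1 x = c}).eval 0 = 0 := by
    intro c
    have := hE {x | Quot.mk r.1 x = c} 0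
    rw [Nat.cast_zero] at this
    rw [this, LCountOn]
    obtain ⟨x, rfl⟩ := Quot.exists_rep c
    have : IsEmpty {f : {y | Quot.mk r.1 y = Quot.mk r.1 x} → Fin 0 //
        ∀ i j : {y | Quot.mk r.1 y = Quot.mk r.1 x}, le i.1 j.1 → f i ≤ f j} :=
      ⟨fun f => (f.1 ⟨x, rfl⟩).elim0⟩
    simp
  have hPr : Pr r = X ^ (clRel r.1) * ∏ c : Quot r.1, (E {x | Quot.mk r.1 x = c}).divX := by
    rw [clRel, Nat.card_eq_fintype_card]
    exact prod_coeff _ hE0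
  rw [coeff_C_mul, coeff_X_pow]
  rcases lt_trichotomy d (clRel r.1) with h | h | h
  · rw [hPr, coeff_X_pow_mul', if_neg (by omega), if_neg (by omega)]; simp
  · subst h
    rw [Spoly_coeff_eq, heapCount_eq le r.1 r.2.1 r.2.2, if_pos rfl, mul_one, hPr,
      coeff_X_pow_mul', if_pos le_rfl, Nat.sub_self, coeff_zero_eq_eval_zero, eval_prod]
    congr 1
    refine Finset.prod_congr rfl fun c _ => ?_
    rw [← coeff_zero_eq_eval_zero, ← coeff_zero_eq_eval_zero, coeff_divX, coeff_derivative]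
    simp
  · rw [Spoly_coeff_gt _ _ _ h, if_neg (by omega)]; simp
end

section
/- For every quasi-poset P on [n], ehr^str_P(X) = Σ_{~ ◁ P} (μ_{P/~} / cl(~)!) · (Π_{C an equivalence class of ~} (ehr^str_{P|C})'(0)) · X^{cl(~)}, where the sum ranges over all P-compatible equivalence relations ~ on Fin n, (ehr^str_{P|C})'(0) denotes the value at 0 of the derivative of the polynomial ehr^str_{P|C} of the restriction of P to the class C, and μ_{P/~} is the number of heap-orderings of the quasi-poset P/~. -/
open Polynomial

/-- Number of elements of `L^str_P(k)`. -/
noncomputable def LstrCount {n : ℕ} (le : Fin n → Fin n → Prop) (k : ℕ) : ℕ :=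
  Nat.card {f : Fin n → Fin k //
    (∀ i j, le i j → f i ≤ f j) ∧ (∀ i j, le i j → f i = f j → le j i)}

/-- Number of elements of `L^str(k)` for the restriction of `le` to `B`. -/
noncomputable def LstrCountOn {n : ℕ} (le : Fin n → Fin n → Prop) (B : Set (Fin n))
    (k : ℕ) : ℕ :=
  Nat.card {f : B → Fin k //
    (∀ i j : B, le i.1 j.1 → f i ≤ f j) ∧
    (∀ i j : B, le i.1 j.1 → f i = f j → le j.1 i.1)}

noncomputable def Lc {α β : Type*} [LE β] (le : α → α → Prop) : ℕ :=
  Nat.card {f : α → β //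
    (∀ i j, le i j → f i ≤ f j) ∧ (∀ i j, le i j → f i = f j → le j i)}

lemma Lc_congr_source {α α' β : Type*} [LE β] (le : α → α → Prop) (le' : α' → α' → Prop)
    (e : α ≃ α') (h : ∀ i j, le i j ↔ le' (e i) (e j)) :
    Lc (β := β) le = Lc (β := β) le' := by
  unfold Lc
  refine Nat.card_congr (Equiv.subtypeEquiv (Equiv.arrowCongr e (Equiv.refl β)) ?_)
  intro f
  constructor
  · rintro ⟨h1, h2⟩
    refine ⟨fun i j hij => ?_, fun i j hij hf => ?_⟩
    · simpa using h1 (e.symm i) (e.symm j) (by rw [h]; simpa using hij)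
    · have := h2 (e.symm i) (e.symm j) (by rw [h]; simpa using hij) (by simpa using hf)
      rw [h] at this; simpa using this
  · rintro ⟨h1, h2⟩
    refine ⟨fun i j hij => ?_, fun i j hij hf => ?_⟩
    · simpa using h1 (e i) (e j) ((h _ _).1 hij)
    · exact (h _ _).2 (h2 (e i) (e j) ((h _ _).1 hij) (by simpa using hf))

lemma Lc_congr_target {α β β' : Type*} [LE β] [LE β'] (le : α → α → Prop)
    (e : β ≃o β') : Lc (β := β) le = Lc (β := β') le := by
  unfold Lc
  refine Nat.card_congr (Equiv.subtypeEquiv (Equiv.arrowCongr (Equiv.refl α) e.toEquiv) ?_)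
  intro f
  simp

/-- fibrewise count -/
lemma card_fibre {α ι β : Type*} [Finite α] [Fintype ι] [LE β] [Finite β]
    (le : α → α → Prop) (f : α → ι) :
    Nat.card {h : α → β // ∀ i j, f i = f j → le i j → h i ≤ h j ∧ (h i = h j → le j i)} =
      ∏ c : ι, Lc (β := β) (fun x y : {x // f x = c} => le x.1 y.1) := by
  unfold Lc
  rw [← Nat.card_pi]
  refine Nat.card_congr
    { toFun := fun h c => ⟨fun x => h.1 x.1,
        fun i j hij => (h.2 i.1 j.1 (i.2.trans j.2.symm) hij).1,
        fun i j hij => (h.2 i.1 j.1 (i.2.trans j.2.symm) hij).2⟩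
      invFun := fun g => ⟨fun x => (g (f x)).1 ⟨x, rfl⟩, ?_⟩
      left_inv := ?_
      right_inv := ?_ }
  · intro i j hf hij
    have key : (g (f j)).1 ⟨j, rfl⟩ = (g (f i)).1 ⟨j, hf.symm⟩ := by
      have : ∀ c (hc : f j = c), (g (f j)).1 ⟨j, rfl⟩ = (g c).1 ⟨j, hc⟩ := by
        rintro c rfl; rfl
      exact this _ _
    beta_reduce
    rw [key]
    exact ⟨(g (f i)).2.1 ⟨i, rfl⟩ ⟨j, hf.symm⟩ hij, (g (f i)).2.2 ⟨i, rfl⟩ ⟨j, hf.symm⟩ hij⟩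
  · intro h; rfl
  · intro g
    funext c
    apply Subtype.ext
    funext x
    obtain ⟨x, rfl⟩ := x
    rfl

lemma lex_count {n d : ℕ} (le : Fin n → Fin n → Prop) (T : Finset (Fin d)) (a : ℕ) :
    LstrCount le ((d - T.card) * a) =
      ∑ᶠ f : {f : Fin n → Fin d // (∀ i j, le i j → f i ≤ f j) ∧ ∀ i, f i ∉ T},
        ∏ c : Fin d, LstrCountOn le {x | f.1 x = c} a := by
  classical
  have hcard : Fintype.card ({x : Fin d // x ∉ T} ×ₗ Fin a) = (d - T.card) * a := by
    have : Fintype.card ({x : Fin d // x ∉ T} ×ₗ Fin a) =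
      Fintype.card ({x : Fin d // x ∉ T} × Fin a) := Fintype.card_congr (ofLex)
    rw [this, Fintype.card_prod, Fintype.card_fin, Fintype.card_subtype_compl]
    simp
  have e := Fintype.orderIsoFinOfCardEq _ hcard
  have h1 : LstrCount le ((d - T.card) * a) =
      Lc (β := {x : Fin d // x ∉ T} ×ₗ Fin a) le := Lc_congr_target le e
  rw [h1, finsum_eq_sum_of_fintype]
  have h2 : ∀ f : {f : Fin n → Fin d // (∀ i j, le i j → f i ≤ f j) ∧ ∀ i, f i ∉ T},
      ∏ c : Fin d, LstrCountOn le {x | f.1 x = c} a = Nat.card {h : Fin n → Fin a //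
        ∀ i j, f.1 i = f.1 j → le i j → h i ≤ h j ∧ (h i = h j → le j i)} := by
    intro f
    rw [card_fibre]
    rfl
  simp_rw [h2]
  rw [← Nat.card_sigma]
  unfold Lc
  refine Nat.card_congr
    { toFun := fun g => ⟨⟨fun i => (ofLex (g.1 i)).1.1, ?_, ?_⟩, ⟨fun i => (ofLex (g.1 i)).2, ?_⟩⟩
      invFun := fun s => ⟨fun i => toLex (⟨s.1.1 i, s.1.2.2 i⟩, s.2.1 i), ?_, ?_⟩
      left_inv := ?_
      right_inv := ?_ }
  · intro i j hij
    have := g.2.1 i j hij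
    rw [Prod.Lex.le_iff] at this
    rcases this with h | h
    · exact le_of_lt h
    · exact le_of_eq (congrArg Subtype.val h.1)
  · intro i
    exact (ofLex (g.1 i)).1.2
  · intro i j hf hij
    have := g.2.1 i j hij
    have h3 := g.2.2 i j hij
    rw [Prod.Lex.le_iff] at this
    have hf' : (ofLex (g.1 i)).1 = (ofLex (g.1 j)).1 := Subtype.ext hf
    refine ⟨?_, fun h => h3 ?_⟩
    · rcases this with h | h
      · exact absurd hf' (ne_of_lt h)
      · exact h.2
    · exact ofLex.injective (Prod.ext hf' h)
  · intro i j hij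
    rw [Prod.Lex.le_iff]
    rcases lt_or_eq_of_le (s.1.2.1 i j hij) with h | h
    · left; exact h
    · right; exact ⟨Subtype.ext h, (s.2.2 i j h hij).1⟩
  · intro i j hij h
    have h' := toLex.injective h
    rw [Prod.mk.injEq, Subtype.mk.injEq] at h'
    exact (s.2.2 i j h'.1 hij).2 h'.2
  · intro g; rfl
  · intro s; rfl

lemma incl_excl {α : Type*} {d : ℕ} {R : Type*} [CommRing R]
    [Fintype α] (P : (α → Fin d) → Prop) (w : (α → Fin d) → R) :
    ∑ T : Finset (Fin d), (-1 : R) ^ T.card *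
      (∑ᶠ f : {f : α → Fin d // P f ∧ ∀ i, f i ∉ T}, w f.1) =
    ∑ᶠ f : {f : α → Fin d // P f ∧ Function.Surjective f}, w f.1 := by
  classical
  have hsub : ∀ Q : (α → Fin d) → Prop, ∑ᶠ f : {f : α → Fin d // Q f}, w f.1 =
      ∑ f : α → Fin d, if Q f then w f else 0 := by
    intro Q
    rw [finsum_eq_sum_of_fintype, ← Finset.sum_filter]
    exact (Finset.sum_subtype _ (by simp) _).symm
  simp_rw [hsub, Finset.mul_sum]
  rw [Finset.sum_comm]
  refine Finset.sum_congr rfl fun f _ => ?_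
  by_cases hP : P f
  swap
  · simp [hP]
  simp only [hP, true_and]
  have h1 : ∀ T : Finset (Fin d), (-1 : R) ^ T.card * (if ∀ i, f i ∉ T then w f else 0) =
      if T ⊆ (Finset.univ.image f)ᶜ then (-1 : R) ^ T.card * w f else 0 := by
    intro T
    have : (∀ i, f i ∉ T) ↔ T ⊆ (Finset.univ.image f)ᶜ := by
      constructor
      · intro h x hx
        simp only [Finset.mem_compl, Finset.mem_image, Finset.mem_univ, true_and, not_exists]
        rintro i rfl
        exact h i hx
      · intro h i hi
        have := h hi
        simp at this
    simp [this]
  simp_rw [h1]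
  rw [← Finset.sum_filter]
  have h2 : Finset.univ.filter (fun T : Finset (Fin d) => T ⊆ (Finset.univ.image f)ᶜ) =
      ((Finset.univ.image f)ᶜ).powerset := by ext; simp
  rw [h2, ← Finset.sum_mul]
  have h3 := congrArg (Int.cast : ℤ → R)
    (Finset.sum_powerset_neg_one_pow_card (x := (Finset.univ.image f)ᶜ))
  push_cast at h3
  rw [h3]
  have h4 : (Finset.univ.image f)ᶜ = ∅ ↔ Function.Surjective f := by
    rw [Finset.compl_eq_empty_iff, Finset.eq_univ_iff_forall]
    simp [Function.Surjective]
  simp only [h4]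
  split_ifs <;> simp

lemma poly_ext_nat {p q : ℚ[X]} (h : ∀ k : ℕ, p.eval (k : ℚ) = q.eval (k : ℚ)) : p = q := by
  apply Polynomial.eq_of_infinite_eval_eq
  refine Set.Infinite.mono ?_ (Set.infinite_range_of_injective (Nat.cast_injective (R := ℚ)))
  rintro _ ⟨k, rfl⟩
  exact h k

lemma fact_formula (d : ℕ) :
    ∑ T : Finset (Fin d), (-1 : ℚ) ^ T.card * ((d - T.card : ℕ) : ℚ) ^ d = d.factorial := by
  classical
  have h := incl_excl (α := Fin d) (d := d) (R := ℚ) (fun _ => True) (fun _ => 1)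
  have h1 : ∀ T : Finset (Fin d), (∑ᶠ f : {f : Fin d → Fin d // True ∧ ∀ i, f i ∉ T}, (1:ℚ)) =
      ((d - T.card : ℕ) : ℚ) ^ d := by
    intro T
    rw [finsum_eq_sum_of_fintype]
    simp only [Finset.sum_const, Finset.card_univ, nsmul_eq_mul, mul_one]
    have : Fintype.card {f : Fin d → Fin d // True ∧ ∀ i, f i ∉ T} = (d - T.card) ^ d := by
      have e : {f : Fin d → Fin d // True ∧ ∀ i, f i ∉ T} ≃ (Fin d → {x : Fin d // x ∉ T}) :=
        { toFun := fun f i => ⟨f.1 i, f.2.2 i⟩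
          invFun := fun g => ⟨fun i => (g i).1, trivial, fun i => (g i).2⟩
          left_inv := fun _ => rfl
          right_inv := fun _ => rfl }
      rw [Fintype.card_congr e, Fintype.card_fun, Fintype.card_subtype_compl]
      simp
    rw [this]; push_cast; rfl
  simp_rw [h1] at h
  rw [h, finsum_eq_sum_of_fintype]
  simp only [Finset.sum_const, Finset.card_univ, nsmul_eq_mul, mul_one]
  have e : {f : Fin d → Fin d // True ∧ Function.Surjective f} ≃ Equiv.Perm (Fin d) :=
    (Equiv.subtypeEquivRight (fun f => by
      rw [true_and, Finite.surjective_iff_bijective])).trans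
      (Equiv.ofBijective (fun f : {f : Fin d → Fin d // Function.Bijective f} =>
        Equiv.ofBijective f.1 f.2) ⟨fun f g h => Subtype.ext (by
          funext x; exact congrArg (fun e : Equiv.Perm (Fin d) => e x) h), fun e => ⟨⟨e, e.bijective⟩, by ext; rfl⟩⟩)
  rw [Fintype.card_congr e, Fintype.card_perm, Fintype.card_fin]

lemma eval_zero_of_nonempty {n : ℕ} (le : Fin n → Fin n → Prop)
    (E : Set (Fin n) → ℚ[X])
    (hE : ∀ (B : Set (Fin n)) (k : ℕ), (E B).eval (k : ℚ) = LstrCountOn le B k)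
    (B : Set (Fin n)) (hB : B.Nonempty) : (E B).eval 0 = 0 := by
  have := hE B 0
  rw [Nat.cast_zero] at this
  rw [this]
  obtain ⟨x, hx⟩ := hB
  unfold LstrCountOn
  have : IsEmpty {f : B → Fin 0 //
    (∀ i j : B, le i.1 j.1 → f i ≤ f j) ∧
    (∀ i j : B, le i.1 j.1 → f i = f j → le j.1 i.1)} := ⟨fun f => (f.1 ⟨x, hx⟩).elim0⟩
  rw [Nat.card_of_isEmpty, Nat.cast_zero]

lemma coeff_formula {n : ℕ} (le : Fin n → Fin n → Prop)
    (p : ℚ[X]) (hp : ∀ k : ℕ, p.eval (k : ℚ) = LstrCount le k)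
    (E : Set (Fin n) → ℚ[X])
    (hE : ∀ (B : Set (Fin n)) (k : ℕ), (E B).eval (k : ℚ) = LstrCountOn le B k) (d : ℕ) :
    p.coeff d * d.factorial =
      ∑ᶠ f : {f : Fin n → Fin d // (∀ i j, le i j → f i ≤ f j) ∧ Function.Surjective f},
        ∏ c : Fin d, (derivative (E {x | f.1 x = c})).eval 0 := by
  classical
  have h1 : ∀ T : Finset (Fin d), p.comp (C ((d - T.card : ℕ) : ℚ) * X) =
      ∑ᶠ f : {f : Fin n → Fin d // (∀ i j, le i j → f i ≤ f j) ∧ ∀ i, f i ∉ T},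
        ∏ c : Fin d, E {x | f.1 x = c} := by
    intro T
    apply poly_ext_nat
    intro k
    rw [eval_comp, eval_mul, eval_C, eval_X, ← Nat.cast_mul, hp, lex_count,
      finsum_eq_sum_of_fintype, finsum_eq_sum_of_fintype, eval_finsetSum]
    push_cast
    refine Finset.sum_congr rfl fun f _ => ?_
    rw [eval_prod]
    exact Finset.prod_congr rfl fun c _ => (hE _ _).symm
  have h2 : ∀ T : Finset (Fin d), p.coeff d * ((d - T.card : ℕ) : ℚ) ^ d =
      ∑ᶠ f : {f : Fin n → Fin d // (∀ i j, le i j → f i ≤ f j) ∧ ∀ i, f i ∉ T},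
        (∏ c : Fin d, E {x | f.1 x = c}).coeff d := by
    intro T
    have := congrArg (fun q => coeff q d) (h1 T)
    simp only [comp_C_mul_X_coeff] at this
    rw [this, finsum_eq_sum_of_fintype, finsum_eq_sum_of_fintype, finsetSum_coeff]
  have h3 := incl_excl (R := ℚ) (α := Fin n) (d := d) (fun f => ∀ i j, le i j → f i ≤ f j)
    (fun f => (∏ c : Fin d, E {x | f x = c}).coeff d)
  simp_rw [← h2] at h3
  rw [← fact_formula, Finset.mul_sum]
  have h4 : ∀ T : Finset (Fin d), p.coeff d * ((-1 : ℚ) ^ T.card * ((d - T.card : ℕ) : ℚ) ^ d) =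
    (-1 : ℚ) ^ T.card * (p.coeff d * ((d - T.card : ℕ) : ℚ) ^ d) := fun T => by ring
  simp_rw [h4]
  rw [h3]
  refine finsum_congr fun f => ?_
  have h5 : ∀ c : Fin d, ∃ q : ℚ[X], E {x | f.1 x = c} = X * q := by
    intro c
    have := eval_zero_of_nonempty le E hE {x | f.1 x = c} (f.2.2 c)
    rw [← coeff_zero_eq_eval_zero] at this
    exact X_dvd_iff.2 this
  choose q hq using h5
  simp_rw [hq]
  rw [Finset.prod_mul_distrib]
  simp [coeff_zero_eq_eval_zero, eval_prod, coeff_X_pow_mul']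

lemma Lc_split {n : ℕ} (le : Fin n → Fin n → Prop)
    (B A : Set (Fin n)) (hA : ∀ x ∈ B, ∀ y ∈ B, le x y → (x ∈ A ↔ y ∈ A)) (k : ℕ) :
    LstrCountOn le B k = LstrCountOn le (B ∩ A) k * LstrCountOn le (B \ A) k := by
  classical
  have h := card_fibre (β := Fin k) (fun x y : B => le x.1 y.1) (fun x : B => decide (x.1 ∈ A))
  rw [Fintype.prod_bool] at h
  have h1 : LstrCountOn le B k = Nat.card {h : B → Fin k // ∀ i j : B,
      decide (i.1 ∈ A) = decide (j.1 ∈ A) → le i.1 j.1 → h i ≤ h j ∧ (h i = h j → le j.1 i.1)} := by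
    unfold LstrCountOn
    refine Nat.card_congr (Equiv.subtypeEquivRight fun f => ?_)
    constructor
    · rintro ⟨h1, h2⟩ i j _ hij
      exact ⟨h1 i j hij, h2 i j hij⟩
    · intro h
      have : ∀ i j : B, le i.1 j.1 → decide (i.1 ∈ A) = decide (j.1 ∈ A) := fun i j hij => by
        simpa using hA i.1 i.2 j.1 j.2 hij
      exact ⟨fun i j hij => (h i j (this i j hij) hij).1,
        fun i j hij => (h i j (this i j hij) hij).2⟩
  rw [h1, h]
  congr 1
  · refine Lc_congr_source (β := Fin k) _ (fun x y : ↥(B ∩ A) => le x.1 y.1)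
      { toFun := fun x => ⟨x.1.1, x.1.2, by simpa using x.2⟩
        invFun := fun x => ⟨⟨x.1, x.2.1⟩, by simpa using x.2.2⟩
        left_inv := fun _ => rfl
        right_inv := fun _ => rfl } fun _ _ => Iff.rfl
  · refine Lc_congr_source (β := Fin k) _ (fun x y : ↥(B \ A) => le x.1 y.1)
      { toFun := fun x => ⟨x.1.1, x.1.2, by simpa using x.2⟩
        invFun := fun x => ⟨⟨x.1, x.2.1⟩, by simpa using x.2.2⟩
        left_inv := fun _ => rfl
        right_inv := fun _ => rfl } fun _ _ => Iff.rfl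

lemma connected_of_ne {n : ℕ} (le : Fin n → Fin n → Prop)
    (E : Set (Fin n) → ℚ[X])
    (hE : ∀ (B : Set (Fin n)) (k : ℕ), (E B).eval (k : ℚ) = LstrCountOn le B k)
    (B : Set (Fin n)) (hB : (derivative (E B)).eval 0 ≠ 0) (x y : Fin n) (hx : x ∈ B)
    (hy : y ∈ B) :
    Relation.ReflTransGen (fun a b => a ∈ B ∧ b ∈ B ∧ (le a b ∨ le b a)) x y := by
  by_contra hxy
  apply hB
  set A : Set (Fin n) :=
    {z | Relation.ReflTransGen (fun a b => a ∈ B ∧ b ∈ B ∧ (le a b ∨ le b a)) x z} with hA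
  have hs : E B = E (B ∩ A) * E (B \ A) := by
    apply poly_ext_nat
    intro k
    rw [eval_mul, hE, hE, hE, Lc_split le B A]
    · push_cast; rfl
    · intro u hu v hv huv
      exact ⟨fun h => h.tail ⟨hu, hv, Or.inl huv⟩, fun h => h.tail ⟨hv, hu, Or.inr huv⟩⟩
  rw [hs, derivative_mul, eval_add, eval_mul, eval_mul,
    eval_zero_of_nonempty le E hE (B ∩ A) ⟨x, hx, Relation.ReflTransGen.refl⟩,
    eval_zero_of_nonempty le E hE (B \ A) ⟨y, hy, hxy⟩]
  simp

lemma clQP_quot {n : ℕ} (le r : Fin n → Fin n → Prop) (hr : Equivalence r)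
    (hc : Compat le r) : ∀ i j, (quotLe le r i j ∧ quotLe le r j i) ↔ r i j := by
  intro i j
  refine ⟨fun h => hc.2 i j h.1 h.2, fun h => ⟨Relation.ReflTransGen.single (Or.inr h),
    Relation.ReflTransGen.single (Or.inr (hr.symm h))⟩⟩

lemma mono_quot {n d : ℕ} (le r : Fin n → Fin n → Prop) (f : Fin n → Fin d)
    (hf : ∀ i j, le i j → f i ≤ f j) (hr : ∀ i j, r i j → f i = f j) :
    ∀ i j, quotLe le r i j → f i ≤ f j := by
  intro i j h
  induction h with
  | refl => exact le_rfl
  | tail _ h ih =>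
    rcases h with h | h
    · exact ih.trans (hf _ _ h)
    · exact ih.trans (hr _ _ h).le

lemma ker_bij {n d : ℕ} (r : Fin n → Fin n → Prop) (f : Fin n → Fin d)
    (h : ∀ i j, f i = f j ↔ r i j) (hs : Function.Surjective f) :
    Function.Bijective (Quot.lift f (fun i j hij => (h i j).2 hij) : Quot r → Fin d) := by
  constructor
  · rintro ⟨x⟩ ⟨y⟩ hxy
    exact Quot.sound ((h x y).1 hxy)
  · intro c
    obtain ⟨x, rfl⟩ := hs c
    exact ⟨Quot.mk r x, rfl⟩

lemma heap_eq {n d : ℕ} (le r : Fin n → Fin n → Prop) (hr : Equivalence r)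
    (hc : Compat le r) (hd : clRel r = d) :
    heapCount (quotLe le r) = Nat.card {f : Fin n → Fin d //
      ((∀ i j, le i j → f i ≤ f j) ∧ Function.Surjective f) ∧ ∀ i j, f i = f j ↔ r i j} := by
  have h1 : clQP (quotLe le r) = d := by
    rw [← hd]
    unfold clQP
    congr 1
    funext i j
    exact propext (clQP_quot le r hr hc i j)
  unfold heapCount
  rw [h1]
  refine Nat.card_congr (Equiv.subtypeEquivRight fun f => ?_)
  simp only [clQP_quot le r hr hc]
  constructor
  · rintro ⟨h2, h3⟩
    refine ⟨⟨fun i j hij => h2 i j (Relation.ReflTransGen.single (Or.inl hij)), ?_⟩, h3⟩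
    have hinj : Function.Injective
        (Quot.lift f (fun i j hij => (h3 i j).2 hij) : Quot r → Fin d) := by
      rintro ⟨x⟩ ⟨y⟩ hxy
      exact Quot.sound ((h3 x y).1 hxy)
    have := hinj.bijective_of_nat_card_le (by
      rw [Nat.card_fin, ← hd]; exact le_rfl)
    intro c
    obtain ⟨⟨x⟩, hx⟩ := this.2 c
    exact ⟨x, hx⟩
  · rintro ⟨⟨h2, h3⟩, h4⟩
    exact ⟨mono_quot le r f h2 fun i j => (h4 i j).2, h4⟩

lemma prod_quot {n d : ℕ} (r : Fin n → Fin n → Prop) (hr : Equivalence r) (f : Fin n → Fin d)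
    (h : ∀ i j, f i = f j ↔ r i j) (hs : Function.Surjective f) (w : Set (Fin n) → ℚ) :
    ∏ᶠ c : Quot r, w {x | Quot.mk r x = c} = ∏ c : Fin d, w {x | f x = c} := by
  rw [← finprod_eq_prod_of_fintype]
  refine finprod_eq_of_bijective _ (ker_bij r f h hs) ?_
  rintro ⟨y⟩
  congr 1
  ext x
  change Quot.mk r x = Quot.mk r y ↔ f x = f y
  rw [h]
  exact ⟨fun h => (Quot.eqvGen_exact h).rec (fun _ _ h => h) hr.refl (fun _ _ _ h => hr.symm h)
    (fun _ _ _ _ _ h1 h2 => hr.trans h1 h2), fun h => Quot.sound h⟩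

/-- `ehr^str_P(X) = Σ_{~ ◁ P} (μ_{P/~} / cl(~)!) · (Π_C (ehr^str_{P|C})'(0)) · X^{cl(~)}`. -/
theorem ehr_str_eq_sum_over_compat {n : ℕ} (le : Fin n → Fin n → Prop)
    (hrefl : ∀ i, le i i)
    (htrans : ∀ i j k, le i j → le j k → le i k)
    (p : ℚ[X]) (hp : ∀ k : ℕ, p.eval (k : ℚ) = LstrCount le k)
    (E : Set (Fin n) → ℚ[X])
    (hE : ∀ (B : Set (Fin n)) (k : ℕ), (E B).eval (k : ℚ) = LstrCountOn le B k) :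
    p = ∑ᶠ r : {r : Fin n → Fin n → Prop // Equivalence r ∧ Compat le r},
      Polynomial.C ((heapCount (quotLe le r.1) : ℚ) / (Nat.factorial (clRel r.1)) *
          ∏ᶠ c : Quot r.1,
            (Polynomial.derivative (E {x | Quot.mk r.1 x = c})).eval 0) *
        Polynomial.X ^ (clRel r.1) := by
  classical
  ext d
  have hfac : (d.factorial : ℚ) ≠ 0 := by exact_mod_cast d.factorial_ne_zero
  rw [← mul_left_inj' hfac, coeff_formula le p hp E hE d]
  have : Fintype {r : Fin n → Fin n → Prop // Equivalence r ∧ Compat le r} := Fintype.ofFinite _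
  rw [finsum_eq_sum_of_fintype, finsum_eq_sum_of_fintype, finsetSum_coeff, Finset.sum_mul]
  set w : Set (Fin n) → ℚ := fun B => (derivative (E B)).eval 0 with hw
  change ∑ f : {f : Fin n → Fin d // (∀ i j, le i j → f i ≤ f j) ∧ Function.Surjective f},
        ∏ c : Fin d, w {x | f.1 x = c} = _
  have key : ∀ r : {r : Fin n → Fin n → Prop // Equivalence r ∧ Compat le r},
      (C ((heapCount (quotLe le r.1) : ℚ) / (Nat.factorial (clRel r.1)) *
          ∏ᶠ c : Quot r.1, w {x | Quot.mk r.1 x = c}) * X ^ (clRel r.1)).coeff d * d.factorial =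
      ∑ f : {f : Fin n → Fin d // (∀ i j, le i j → f i ≤ f j) ∧ Function.Surjective f},
        if (∀ i j, f.1 i = f.1 j ↔ r.1 i j) then ∏ c : Fin d, w {x | f.1 x = c} else 0 := by
    intro r
    rw [coeff_C_mul_X_pow]
    split_ifs with hd
    · have h1 := heap_eq le r.1 r.2.1 r.2.2 hd.symm
      have h2 : ∀ f : {f : Fin n → Fin d // (∀ i j, le i j → f i ≤ f j) ∧ Function.Surjective f},
          (if (∀ i j, f.1 i = f.1 j ↔ r.1 i j) then ∏ c : Fin d, w {x | f.1 x = c} else 0) =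
          if (∀ i j, f.1 i = f.1 j ↔ r.1 i j) then ∏ᶠ c : Quot r.1, w {x | Quot.mk r.1 x = c}
            else 0 := by
        intro f
        split_ifs with h
        · exact (prod_quot r.1 r.2.1 f.1 h f.2.2 w).symm
        · rfl
      simp_rw [h2]
      rw [← Finset.sum_filter, Finset.sum_const, h1, ← hd, nsmul_eq_mul]
      have h3 : Nat.card {f : Fin n → Fin d //
          ((∀ i j, le i j → f i ≤ f j) ∧ Function.Surjective f) ∧ ∀ i j, f i = f j ↔ r.1 i j} =
          (Finset.univ.filter (fun f : {f : Fin n → Fin d //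
            (∀ i j, le i j → f i ≤ f j) ∧ Function.Surjective f} =>
              ∀ i j, f.1 i = f.1 j ↔ r.1 i j)).card := by
        rw [← Fintype.card_subtype, ← Nat.card_eq_fintype_card]
        exact (Nat.card_congr (Equiv.subtypeSubtypeEquivSubtypeInter _ _)).symm
      rw [h3]
      field_simp
    · rw [zero_mul]
      symm
      refine Finset.sum_eq_zero fun f _ => if_neg fun h => hd ?_
      have := Nat.card_eq_of_bijective _ (ker_bij r.1 f.1 h f.2.2)
      rw [Nat.card_fin] at this
      exact this.symm
  rw [Finset.sum_congr rfl fun r _ => key r, Finset.sum_comm]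
  refine Finset.sum_congr rfl fun f _ => ?_
  by_cases h0 : ∏ c : Fin d, w {x | f.1 x = c} = 0
  · rw [h0]; simp
  have hcompat : Compat le (fun i j => f.1 i = f.1 j) := by
    refine ⟨fun x y hxy => ?_, fun i j hij hji => ?_⟩
    · have h1 : w {z | f.1 z = f.1 x} ≠ 0 := fun h =>
        h0 (Finset.prod_eq_zero (Finset.mem_univ (f.1 x)) h)
      exact connected_of_ne le E hE _ h1 x y rfl hxy.symm
    · have h1 := mono_quot le (fun i j => f.1 i = f.1 j) f.1 f.2.1 (fun _ _ h => h)
      exact le_antisymm (h1 i j hij) (h1 j i hji)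
  let r0 : {r : Fin n → Fin n → Prop // Equivalence r ∧ Compat le r} :=
    ⟨fun i j => f.1 i = f.1 j, ⟨fun _ => rfl, fun h => h.symm, fun h1 h2 => h1.trans h2⟩, hcompat⟩
  rw [Finset.sum_eq_single r0]
  · rw [if_pos (fun i j => Iff.rfl)]
  · intro r _ hr
    refine if_neg fun h => hr (Subtype.ext ?_)
    funext i j
    exact propext (h i j).symm
  · simp
end
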